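/- Let τ = (1 + √5)/2 and let p ∈ {4, 5, 10}. Then the lattice S(p,τ) is generated by the union of two mirror stabilizers: the subgroup of GL(3,ℂ) generated by Stab(m₁) ∪ Stab(m₂) equals S(p,τ), where m₁ is the mirror of the complex reflection R₁ and m₂ = span_ℂ{e₁, e₂} is the mirror of the complex reflection (R₁R₂)⁵. -/

import Mathlib

open Matrix

noncomputable section

/-- `u = exp(2πi/(3p))`. -/
def uPar (p : ℕ) : ℂ := Complex.exp (2 * Real.pi * Complex.I / (3 * p))

/-- `α = 2 − u³ − conj(u)³`. -/
def alphaPar (p : ℕ) : ℂ :=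
  2 - uPar p ^ 3 - starRingEnd ℂ (uPar p) ^ 3

/-- `β = (conj(u)² − u)·τ`. -/
def betaPar (p : ℕ) (τ : ℂ) : ℂ := (starRingEnd ℂ (uPar p) ^ 2 - uPar p) * τ

/-- The generator `R₁` of `S(p,τ)`. -/
def R1S (p : ℕ) (τ : ℂ) : Matrix (Fin 3) (Fin 3) ℂ :=
  !![uPar p ^ 2, τ, -(uPar p) * starRingEnd ℂ τ;
     0, starRingEnd ℂ (uPar p), 0;
     0, 0, starRingEnd ℂ (uPar p)]

/-- The reflection `R₂ = J·R₁·J⁻¹` of `S(p,τ)`. -/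
def R2S (p : ℕ) (τ : ℂ) : Matrix (Fin 3) (Fin 3) ℂ :=
  !![starRingEnd ℂ (uPar p), 0, 0;
     -(uPar p) * starRingEnd ℂ τ, uPar p ^ 2, τ;
     0, 0, starRingEnd ℂ (uPar p)]

/-- The reflection `R₃ = J·R₂·J⁻¹` of `S(p,τ)`. -/
def R3S (p : ℕ) (τ : ℂ) : Matrix (Fin 3) (Fin 3) ℂ :=
  !![starRingEnd ℂ (uPar p), 0, 0;
     0, starRingEnd ℂ (uPar p), 0;
     τ, -(uPar p) * starRingEnd ℂ τ, uPar p ^ 2]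

/-- The cyclic permutation matrix `J`. -/
def Jmat : Matrix (Fin 3) (Fin 3) ℂ :=
  !![0, 0, 1; 1, 0, 0; 0, 1, 0]

/-- The linear functional `x ↦ a·x₁ + b·x₂ + c·x₃` on `ℂ³`. -/
def lfun (a b c : ℂ) : (Fin 3 → ℂ) →ₗ[ℂ] ℂ :=
  a • (LinearMap.proj 0 : (Fin 3 → ℂ) →ₗ[ℂ] ℂ) +
    b • (LinearMap.proj 1 : (Fin 3 → ℂ) →ₗ[ℂ] ℂ) +
    c • (LinearMap.proj 2 : (Fin 3 → ℂ) →ₗ[ℂ] ℂ)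

/-- The mirror of `R₁`: `{x ∈ ℂ³ : α·x₁ + β·x₂ + conj(β)·x₃ = 0}`,
the `H`-orthogonal complement of `e₁`. -/
def mirror1 (p : ℕ) (τ : ℂ) : Submodule ℂ (Fin 3 → ℂ) :=
  LinearMap.ker (lfun (alphaPar p) (betaPar p τ) (starRingEnd ℂ (betaPar p τ)))

/-- The stabilizer of a subspace `m` of `ℂ³` inside a subgroup `S` of `GL(3,ℂ)`:
the set of elements of `S` mapping `m` onto itself. -/
def mirrorStab (S : Subgroup (GL (Fin 3) ℂ)) (m : Submodule ℂ (Fin 3 → ℂ)) :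
    Set (GL (Fin 3) ℂ) :=
  {g | g ∈ S ∧ m.map (Matrix.mulVecLin (g : Matrix (Fin 3) (Fin 3) ℂ)) = m}

end

theorem aux_stab_of_le (g : GL (Fin 3) ℂ) (m : Submodule ℂ (Fin 3 → ℂ))
    (h : ∀ x ∈ m, (g : Matrix (Fin 3) (Fin 3) ℂ) *ᵥ x ∈ m) :
    m.map (Matrix.mulVecLin (g : Matrix (Fin 3) (Fin 3) ℂ)) = m := by
  have hinj : Function.Injective (Matrix.mulVecLin (g : Matrix (Fin 3) (Fin 3) ℂ)) := by
    have := Matrix.mulVec_injective_of_isUnit (A := (g : Matrix (Fin 3) (Fin 3) ℂ)) g.isUnit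
    exact this
  apply Submodule.eq_of_le_of_finrank_eq
  · rintro _ ⟨x, hx, rfl⟩
    exact h x hx
  · exact (Submodule.equivMapOfInjective _ hinj m).finrank_eq.symm

theorem aux_braid (u v t : ℂ) (huv : u * v = 1) (ht : t ^ 2 = t + 1) :
    let A : Matrix (Fin 3) (Fin 3) ℂ := !![u ^ 2, t, -u * t; 0, v, 0; 0, 0, v]
    let B : Matrix (Fin 3) (Fin 3) ℂ := !![v, 0, 0; -u * t, u ^ 2, t; 0, 0, v]
    A * B * A * B * A = B * A * B * A * B := by
  intro A B
  simp only [A, B]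
  ext i j
  fin_cases i <;> fin_cases j <;> simp [Matrix.mul_apply, Fin.sum_univ_three] <;> grind

theorem aux_u_cube (p : ℕ) (hp : 2 ≤ p) : uPar p ^ 3 ≠ 1 := by
  have h := Complex.isPrimitiveRoot_exp p (by omega)
  have hp0 : (p : ℂ) ≠ 0 := by
    have : p ≠ 0 := by omega
    exact_mod_cast this
  have : uPar p ^ 3 = Complex.exp (2 * Real.pi * Complex.I / p) := by
    rw [uPar, ← Complex.exp_nat_mul]
    congr 1
    push_cast
    field_simp
  rw [this]
  exact h.ne_one (by omega)

theorem aux_u_conj (p : ℕ) : uPar p * starRingEnd ℂ (uPar p) = 1 := by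
  have : uPar p = Complex.exp (((2 * Real.pi / (3 * p) : ℝ) : ℂ) * Complex.I) := by
    rw [uPar]
    congr 1
    push_cast
    ring
  rw [this, Complex.mul_conj, Complex.normSq_eq_norm_sq, Complex.norm_exp_ofReal_mul_I]
  simp

theorem aux_mem_mirror1 (p : ℕ) (hp : 2 ≤ p) (τ : ℂ) (x : Fin 3 → ℂ) :
    x ∈ mirror1 p τ ↔ R1S p τ *ᵥ x = starRingEnd ℂ (uPar p) • x := by
  have h1 := aux_u_cube p hp
  have h2 := aux_u_conj p
  have e : x ∈ mirror1 p τ ↔ alphaPar p * x 0 + betaPar p τ * x 1 +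
      starRingEnd ℂ (betaPar p τ) * x 2 = 0 := by
    simp [mirror1, lfun]
  rw [e]
  simp only [alphaPar, betaPar, map_mul, map_sub, map_pow, Complex.conj_conj, R1S]
  generalize starRingEnd ℂ τ = t' at *
  generalize starRingEnd ℂ (uPar p) = v at *
  generalize uPar p = u at *
  have hne : v ^ 2 - u ≠ 0 := by
    intro h
    apply h1
    grind
  constructor
  · intro h
    ext i
    fin_cases i
    · simp [Matrix.mulVec, dotProduct, Fin.sum_univ_three]
      apply mul_left_cancel₀ hne
      grind
    · simp [Matrix.mulVec, dotProduct, Fin.sum_univ_three]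
    · simp [Matrix.mulVec, dotProduct, Fin.sum_univ_three]
  · intro h
    have h0 := congrFun h 0
    simp [Matrix.mulVec, dotProduct, Fin.sum_univ_three] at h0
    grind

theorem aux_mem_span (x : Fin 3 → ℂ) :
    x ∈ Submodule.span ℂ ({Pi.single 0 1, Pi.single 1 1} : Set (Fin 3 → ℂ)) ↔ x 2 = 0 := by
  rw [Submodule.mem_span_pair]
  constructor
  · rintro ⟨a, b, rfl⟩
    simp [Pi.single_apply]
  · intro h
    refine ⟨x 0, x 1, ?_⟩
    ext i
    fin_cases i <;> simp [Pi.single_apply, h]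

/-- For `τ = (1+√5)/2` and `p ∈ {4,5,10}`, the lattice `S(p,τ)` is generated by
the union of the stabilizers of the mirror of `R₁` and of the mirror
`span{e₁, e₂}` of the complex reflection `(R₁R₂)⁵`. -/
theorem stmt16 (p : ℕ) (hp : p = 4 ∨ p = 5 ∨ p = 10)
    (τ : ℂ) (hτ : τ = (1 + Real.sqrt 5) / 2)
    (r₁ j : GL (Fin 3) ℂ)
    (hr₁ : (↑r₁ : Matrix (Fin 3) (Fin 3) ℂ) = R1S p τ)
    (hj : (↑j : Matrix (Fin 3) (Fin 3) ℂ) = Jmat) :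
    Subgroup.closure
        (mirrorStab (Subgroup.closure {r₁, j}) (mirror1 p τ) ∪
          mirrorStab (Subgroup.closure {r₁, j})
            (Submodule.span ℂ
              {Pi.single 0 1, Pi.single 1 1})) =
      Subgroup.closure {r₁, j} := by
  have hp2 : 2 ≤ p := by omega
  have hconj : starRingEnd ℂ τ = τ := by
    have e : τ = (((1 + Real.sqrt 5) / 2 : ℝ) : ℂ) := by rw [hτ]; push_cast; rfl
    rw [e, Complex.conj_ofReal]
  have ht : τ ^ 2 = τ + 1 := by
    have h5 : ((Real.sqrt 5 : ℝ) : ℂ) ^ 2 = 5 := by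
      rw [← Complex.ofReal_pow, Real.sq_sqrt (by norm_num)]; norm_num
    rw [hτ]
    linear_combination h5 / 4
  have hr1S : r₁ ∈ Subgroup.closure {r₁, j} := Subgroup.subset_closure (by simp)
  have hjS : j ∈ Subgroup.closure {r₁, j} := Subgroup.subset_closure (by simp)
  set S := Subgroup.closure {r₁, j} with hS
  -- the second reflection
  obtain ⟨r₂, hr₂def⟩ : ∃ r₂, r₂ = j * r₁ * j⁻¹ := ⟨_, rfl⟩
  have hr2S : r₂ ∈ S := hr₂def ▸ S.mul_mem (S.mul_mem hjS hr1S) (S.inv_mem hjS)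
  have hjr : j * r₁ = r₂ * j := by rw [hr₂def]; group
  have hr₂ : (r₂ : Matrix (Fin 3) (Fin 3) ℂ) = R2S p τ := by
    have h1 : (r₂ : Matrix (Fin 3) (Fin 3) ℂ) * Jmat = R2S p τ * Jmat := by
      have := congrArg (fun g : GL (Fin 3) ℂ => (g : Matrix (Fin 3) (Fin 3) ℂ)) hjr
      simp only [Units.val_mul, hj, hr₁] at this
      rw [← this]
      ext a b
      fin_cases a <;> fin_cases b <;>
        simp [Jmat, R1S, R2S, Matrix.mul_apply, Fin.sum_univ_three]
    rw [← hj] at h1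
    exact j.isUnit.mul_right_cancel h1
  have hbraid : r₁ * r₂ * r₁ * r₂ * r₁ = r₂ * r₁ * r₂ * r₁ * r₂ := by
    apply Units.ext
    simp only [Units.val_mul, hr₁, hr₂, R1S, R2S, hconj]
    exact aux_braid (uPar p) _ τ (aux_u_conj p) ht
  have hM1 : ∀ g ∈ S, g * r₁ = r₁ * g → g ∈ mirrorStab S (mirror1 p τ) := by
    intro g hg hc
    refine ⟨hg, aux_stab_of_le g _ fun x hx => ?_⟩
    rw [aux_mem_mirror1 p hp2] at hx ⊢
    have := congrArg (fun g : GL (Fin 3) ℂ => (g : Matrix (Fin 3) (Fin 3) ℂ)) hc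
    simp only [Units.val_mul, hr₁] at this
    rw [Matrix.mulVec_mulVec, ← this, ← Matrix.mulVec_mulVec, hx, Matrix.mulVec_smul]
  have hA : ∀ x : Fin 3 → ℂ, x 2 = 0 → ((r₁ : Matrix (Fin 3) (Fin 3) ℂ) *ᵥ x) 2 = 0 := by
    intro x hx
    simp [hr₁, R1S, Matrix.mulVec, dotProduct, Fin.sum_univ_three, hx]
  have hB : ∀ x : Fin 3 → ℂ, x 2 = 0 → ((r₂ : Matrix (Fin 3) (Fin 3) ℂ) *ᵥ x) 2 = 0 := by
    intro x hx
    simp [hr₂, R2S, Matrix.mulVec, dotProduct, Fin.sum_univ_three, hx]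
  apply le_antisymm
  · rw [Subgroup.closure_le]
    rintro g (hg | hg)
    · exact hg.1
    · exact hg.1
  · set G := Subgroup.closure (mirrorStab S (mirror1 p τ) ∪
          mirrorStab S (Submodule.span ℂ {Pi.single 0 1, Pi.single 1 1})) with hG
    have h1 : r₁ ∈ G := Subgroup.subset_closure (Or.inl (hM1 r₁ hr1S rfl))
    have h2 : r₂ ∈ G := by
      refine Subgroup.subset_closure (Or.inr ⟨hr2S, aux_stab_of_le _ _ fun x hx => ?_⟩)
      rw [aux_mem_span] at hx ⊢
      exact hB x hx
    have hhS : r₁ * r₂ * r₁ * r₂ ∈ S := S.mul_mem (S.mul_mem (S.mul_mem hr1S hr2S) hr1S) hr2S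
    have hhG : r₁ * r₂ * r₁ * r₂ ∈ G := G.mul_mem (G.mul_mem (G.mul_mem h1 h2) h1) h2
    -- `h := r₁ r₂ r₁ r₂` conjugates `r₁` to `r₂`, as does `j`
    obtain ⟨h, hh⟩ : ∃ h, h = r₁ * r₂ * r₁ * r₂ := ⟨_, rfl⟩
    rw [← hh] at hhS hhG
    have hhc : h * r₁ = r₂ * h := by
      rw [hh, hbraid]; group
    have h3 : h⁻¹ * j ∈ G := by
      refine Subgroup.subset_closure (Or.inl (hM1 _ (S.mul_mem (S.inv_mem hhS) hjS) ?_))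
      rw [mul_assoc, hjr, ← mul_assoc, ← mul_assoc]
      congr 1
      rw [inv_mul_eq_iff_eq_mul, ← mul_assoc, hhc, mul_assoc, mul_inv_cancel, mul_one]
    have h4 : j ∈ G := by
      have := G.mul_mem hhG h3
      rwa [mul_inv_cancel_left] at this
    rw [hS, Subgroup.closure_le]
    rintro g (rfl | rfl)
    · exact h1
    · exact h4
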